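/- Let q ≥ 2. There is a well-defined linear map Θ on V_[A] determined by Θ(A_{σ,σ·τ}) = Σ_{σ̂∈N_τ∩C_σ} A_{σ̂,iσ̂·τ} − Σ_{σ̂∈N_τ∩N_σ} A_{σ̂,iσ̂·τ} for τ ∈ σ_q and σ ∈ C_τ, and its image is orthogonal to V_{adj}: ⟨v^{adj}_ν, Θ(x)⟩ = 0 for every ν ∈ σ_q and every x ∈ V_[A]. -/

import Mathlib

open Matrix MeasureTheory
open scoped Kronecker

noncomputable section

namespace CliffordPaper

/-- The single-qubit Pauli matrices `1, X, Y, Z`. -/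
def pauli1 : Fin 4 → Matrix (Fin 2) (Fin 2) ℂ :=
  ![1, !![0, 1; 1, 0], !![0, -Complex.I; Complex.I, 0], !![1, 0; 0, -1]]

/-- Index type for the computational basis of `q` qubits. -/
abbrev Idx (q : ℕ) := Fin q → Fin 2

/-- The space `M_d` of `d × d` complex matrices, `d = 2^q`. -/
abbrev Mat (q : ℕ) := Matrix (Idx q) (Idx q) ℂ

/-- The space `M_d ⊗ M_d`, realized as matrices indexed by the product index set
(the tensor factors combine via the Kronecker product `⊗ₖ`). -/
abbrev BMat (q : ℕ) := Matrix (Idx q × Idx q) (Idx q × Idx q) ℂ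

/-- The `q`-fold Kronecker product of single-qubit Paulis with labels `a`. -/
def PauliOp {q : ℕ} (a : Fin q → Fin 4) : Mat q :=
  Matrix.of fun x y => ∏ i, pauli1 (a i) (x i) (y i)

/-- `√d` as a complex number, where `d = 2^q`. -/
def sqrtd (q : ℕ) : ℂ := (Real.sqrt (2 ^ q) : ℝ)

/-- The set `σ̂_q` of normalized Pauli operators. -/
def sigmaHat (q : ℕ) : Set (Mat q) :=
  {M | ∃ a : Fin q → Fin 4, M = (sqrtd q)⁻¹ • PauliOp a}

/-- The normalized identity `σ₀ = 1/√d`. -/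
def sigma0 (q : ℕ) : Mat q := (sqrtd q)⁻¹ • (1 : Mat q)

/-- `σ_q = σ̂_q \ {σ₀}`. -/
def sigmaSet (q : ℕ) : Set (Mat q) := sigmaHat q \ {sigma0 q}

/-- `N_τ`: the normalized nonidentity Paulis anticommuting with `τ`. -/
def NSet {q : ℕ} (τ : Mat q) : Set (Mat q) :=
  {σ | σ ∈ sigmaSet q ∧ σ * τ + τ * σ = 0}

/-- `C_τ`: the normalized nonidentity Paulis distinct from `τ` commuting with `τ`. -/
def CSet {q : ℕ} (τ : Mat q) : Set (Mat q) :=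
  {σ | σ ∈ sigmaSet q ∧ σ ≠ τ ∧ σ * τ = τ * σ}

/-- `Ĉ_τ`: the normalized Paulis commuting with `τ`. -/
def CHatSet {q : ℕ} (τ : Mat q) : Set (Mat q) :=
  {σ | σ ∈ sigmaHat q ∧ σ * τ = τ * σ}

/-- The normalized product `σ·τ = √d στ`. -/
def nprod {q : ℕ} (σ τ : Mat q) : Mat q := sqrtd q • (σ * τ)

/-- The Clifford normalizer `𝒩_q`: unitaries mapping normalized Paulis to
signed normalized Paulis under conjugation. -/
def Cliff (q : ℕ) : Set (Mat q) :=
  {U | U ∈ Matrix.unitaryGroup (Idx q) ℂ ∧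
    ∀ σ ∈ sigmaHat q, ∃ τ ∈ sigmaHat q, U * σ * Uᴴ = τ ∨ U * σ * Uᴴ = -τ}

/-- The two-copy representation `φ⊗²(U) : A ⊗ B ↦ (UAU†) ⊗ (UBU†)`, extended linearly. -/
def twoCopy {q : ℕ} (U : Mat q) : BMat q →ₗ[ℂ] BMat q where
  toFun M := (U ⊗ₖ U) * M * (U ⊗ₖ U)ᴴ
  map_add' M N := by
    show (U ⊗ₖ U) * (M + N) * (U ⊗ₖ U)ᴴ = (U ⊗ₖ U) * M * (U ⊗ₖ U)ᴴ + (U ⊗ₖ U) * N * (U ⊗ₖ U)ᴴ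
    rw [Matrix.mul_add, Matrix.add_mul]
  map_smul' c M := by
    show (U ⊗ₖ U) * (c • M) * (U ⊗ₖ U)ᴴ = c • ((U ⊗ₖ U) * M * (U ⊗ₖ U)ᴴ)
    rw [Matrix.mul_smul, Matrix.smul_mul]

/-- The Hilbert–Schmidt inner product `⟨A, B⟩ = tr(A† B)`. -/
def hs {q : ℕ} (A B : BMat q) : ℂ := (Aᴴ * B).trace

/-- A subspace is invariant under the two-copy representation of `𝒩_q`. -/
def IsInvariant (q : ℕ) (W : Submodule ℂ (BMat q)) : Prop :=
  ∀ U ∈ Cliff q, ∀ v ∈ W, twoCopy U v ∈ W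

/-- A nonzero invariant subspace carries an irreducible subrepresentation. -/
def CarriesIrred (q : ℕ) (W : Submodule ℂ (BMat q)) : Prop :=
  W ≠ ⊥ ∧ IsInvariant q W ∧ ∀ W' ≤ W, IsInvariant q W' → W' = ⊥ ∨ W' = W

/-- Two invariant subspaces carry equivalent subrepresentations: there is a linear
isomorphism between them intertwining the two-copy representation. -/
def EquivRep (q : ℕ) (W W' : Submodule ℂ (BMat q)) : Prop :=
  ∃ T : BMat q →ₗ[ℂ] BMat q, Submodule.map T W = W' ∧
    (∀ x ∈ W, T x = 0 → x = 0) ∧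
    ∀ U ∈ Cliff q, ∀ x ∈ W, T (twoCopy U x) = twoCopy U (T x)

/-- `S_{σ,τ} = (σ⊗τ + τ⊗σ)/√2`. -/
def SVec {q : ℕ} (σ τ : Mat q) : BMat q :=
  ((Real.sqrt 2 : ℂ))⁻¹ • (σ ⊗ₖ τ + τ ⊗ₖ σ)

/-- `A_{σ,τ} = (σ⊗τ − τ⊗σ)/√2`. -/
def AVec {q : ℕ} (σ τ : Mat q) : BMat q :=
  ((Real.sqrt 2 : ℂ))⁻¹ • (σ ⊗ₖ τ - τ ⊗ₖ σ)

/-- The trivial sector `V_id`. -/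
def Vid (q : ℕ) : Submodule ℂ (BMat q) :=
  Submodule.span ℂ {sigma0 q ⊗ₖ sigma0 q}

/-- The right adjoint sector `V_r`. -/
def Vr (q : ℕ) : Submodule ℂ (BMat q) :=
  Submodule.span ℂ {M | ∃ τ ∈ sigmaSet q, M = sigma0 q ⊗ₖ τ}

/-- The left adjoint sector `V_l`. -/
def Vl (q : ℕ) : Submodule ℂ (BMat q) :=
  Submodule.span ℂ {M | ∃ τ ∈ sigmaSet q, M = τ ⊗ₖ sigma0 q}

/-- The diagonal sector `V_d`. -/
def Vdiag (q : ℕ) : Submodule ℂ (BMat q) :=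
  Submodule.span ℂ {M | ∃ τ ∈ sigmaSet q, M = τ ⊗ₖ τ}

/-- The symmetric commuting sector `V_[S]`. -/
def VScom (q : ℕ) : Submodule ℂ (BMat q) :=
  Submodule.span ℂ {M | ∃ τ ∈ sigmaSet q, ∃ σ ∈ CSet τ, M = SVec σ τ}

/-- The symmetric anti-commuting sector `V_{S}`. -/
def VSanti (q : ℕ) : Submodule ℂ (BMat q) :=
  Submodule.span ℂ {M | ∃ τ ∈ sigmaSet q, ∃ σ ∈ NSet τ, M = SVec σ τ}

/-- The antisymmetric commuting sector `V_[A]`. -/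
def VAcom (q : ℕ) : Submodule ℂ (BMat q) :=
  Submodule.span ℂ {M | ∃ τ ∈ sigmaSet q, ∃ σ ∈ CSet τ, M = AVec σ τ}

/-- The antisymmetric anti-commuting sector `V_{A}`. -/
def VAanti (q : ℕ) : Submodule ℂ (BMat q) :=
  Submodule.span ℂ {M | ∃ τ ∈ sigmaSet q, ∃ σ ∈ NSet τ, M = AVec σ τ}

/-- `V_[A]` presented with the spanning vectors `A_{σ,σ·τ}`, `σ ∈ C_τ`. -/
def VAcom' (q : ℕ) : Submodule ℂ (BMat q) :=
  Submodule.span ℂ {M | ∃ τ ∈ sigmaSet q, ∃ σ ∈ CSet τ, M = AVec σ (nprod σ τ)}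

/-- `V_0 = span{Σ_{σ∈σ_q} σ⊗σ}`. -/
def V0diag (q : ℕ) : Submodule ℂ (BMat q) :=
  Submodule.span ℂ {∑ᶠ σ ∈ sigmaSet q, σ ⊗ₖ σ}

/-- `V_1`, the "positive" part of the diagonal sector. -/
def V1diag (q : ℕ) : Submodule ℂ (BMat q) :=
  Submodule.span ℂ {v | ∃ lam : Mat q → ℂ,
    v = ∑ᶠ σ ∈ sigmaSet q, lam σ • (σ ⊗ₖ σ) ∧
    (∑ᶠ σ ∈ sigmaSet q, lam σ) = 0 ∧
    ∀ τ ∈ sigmaSet q, (∑ᶠ σ ∈ NSet τ, lam σ) = -((2 ^ q : ℂ) / 2) * lam τ}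

/-- `V_2`, the "negative" part of the diagonal sector. -/
def V2diag (q : ℕ) : Submodule ℂ (BMat q) :=
  Submodule.span ℂ {v | ∃ lam : Mat q → ℂ,
    v = ∑ᶠ σ ∈ sigmaSet q, lam σ • (σ ⊗ₖ σ) ∧
    (∑ᶠ σ ∈ sigmaSet q, lam σ) = 0 ∧
    ∀ τ ∈ sigmaSet q, (∑ᶠ σ ∈ NSet τ, lam σ) = ((2 ^ q : ℂ) / 2) * lam τ}

/-- `v^[adj]_τ = (2|C_τ|)^{-1/2} Σ_{σ∈C_τ} S_{σ,σ·τ}`. -/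
def vadjS {q : ℕ} (τ : Mat q) : BMat q :=
  ((Real.sqrt (2 * ((CSet τ).ncard : ℝ)) : ℂ))⁻¹ • ∑ᶠ σ ∈ CSet τ, SVec σ (nprod σ τ)

/-- `v^{adj}_τ = (2|N_τ|)^{-1/2} Σ_{σ∈N_τ} A_{σ,iσ·τ}`. -/
def vadjA {q : ℕ} (τ : Mat q) : BMat q :=
  ((Real.sqrt (2 * ((NSet τ).ncard : ℝ)) : ℂ))⁻¹ •
    ∑ᶠ σ ∈ NSet τ, AVec σ (Complex.I • nprod σ τ)

/-- The symmetric adjoint sector `V_[adj]`. -/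
def VadjS (q : ℕ) : Submodule ℂ (BMat q) :=
  Submodule.span ℂ {M | ∃ τ ∈ sigmaSet q, M = vadjS τ}

/-- The antisymmetric adjoint sector `V_{adj}`. -/
def VadjA (q : ℕ) : Submodule ℂ (BMat q) :=
  Submodule.span ℂ {M | ∃ τ ∈ sigmaSet q, M = vadjA τ}

/-- The orthogonal complement `V^⊥_{adj}` of `V_{adj}` inside `V_{A}`. -/
def VadjAperp (q : ℕ) : Submodule ℂ (BMat q) :=
  Submodule.span ℂ {v | v ∈ VAanti q ∧ ∀ w ∈ VadjA q, hs w v = 0}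

/-- `V_{1}^τ`. -/
def V1symτ (q : ℕ) (τ : Mat q) : Submodule ℂ (BMat q) :=
  Submodule.span ℂ {v | ∃ lam : Mat q → ℂ,
    v = ∑ᶠ σ ∈ NSet τ, lam σ • SVec σ (Complex.I • nprod σ τ) ∧
    ∀ ν ∈ NSet τ, (∑ᶠ σ ∈ NSet τ ∩ CSet ν, lam σ) - (∑ᶠ σ ∈ NSet τ ∩ NSet ν, lam σ)
      = ((2 ^ q : ℂ) / 2) * lam ν}

/-- `V_{2}^τ`. -/
def V2symτ (q : ℕ) (τ : Mat q) : Submodule ℂ (BMat q) :=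
  Submodule.span ℂ {v | ∃ lam : Mat q → ℂ,
    v = ∑ᶠ σ ∈ NSet τ, lam σ • SVec σ (Complex.I • nprod σ τ) ∧
    ∀ ν ∈ NSet τ, (∑ᶠ σ ∈ NSet τ ∩ CSet ν, lam σ) - (∑ᶠ σ ∈ NSet τ ∩ NSet ν, lam σ)
      = -((2 ^ q : ℂ) / 2) * lam ν}

/-- `V_{1} = ⊕_τ V_{1}^τ`. -/
def V1sym (q : ℕ) : Submodule ℂ (BMat q) := ⨆ τ ∈ sigmaSet q, V1symτ q τ

/-- `V_{2} = ⊕_τ V_{2}^τ`. -/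
def V2sym (q : ℕ) : Submodule ℂ (BMat q) := ⨆ τ ∈ sigmaSet q, V2symτ q τ

/-- The defining property of the map `Θ` on `V_[A]`. -/
def ThetaProp (q : ℕ) (Θ : BMat q →ₗ[ℂ] BMat q) : Prop :=
  ∀ τ ∈ sigmaSet q, ∀ σ ∈ CSet τ,
    Θ (AVec σ (nprod σ τ)) =
      (∑ᶠ σ' ∈ NSet τ ∩ CSet σ, AVec σ' (Complex.I • nprod σ' τ)) -
      ∑ᶠ σ' ∈ NSet τ ∩ NSet σ, AVec σ' (Complex.I • nprod σ' τ)

/-- `V` = span of off-diagonal products `σ⊗σ̂`, `σ ≠ σ̂`. -/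
def Voff (q : ℕ) : Submodule ℂ (BMat q) :=
  Submodule.span ℂ {M | ∃ σ ∈ sigmaSet q, ∃ σ' ∈ sigmaSet q, σ ≠ σ' ∧ M = σ ⊗ₖ σ'}

/-- `V^τ` = span of the `σ⊗σ̂` with `σ·σ̂ ∈ {τ, −τ, iτ, −iτ}`. -/
def Vtau (q : ℕ) (τ : Mat q) : Submodule ℂ (BMat q) :=
  Submodule.span ℂ {M | ∃ σ ∈ sigmaSet q, ∃ σ' ∈ sigmaSet q,
    (nprod σ σ' = τ ∨ nprod σ σ' = -τ ∨ nprod σ σ' = Complex.I • τ ∨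
      nprod σ σ' = -(Complex.I • τ)) ∧ M = σ ⊗ₖ σ'}


/-!
Write `P_a` for the normalized Pauli with label `a` and `χ(a, b) = ±1` for the sign with which `P_a`
and `P_b` commute. Since `⁅P_a, P_t⁆ = (1 - χ(a, t)) P_a P_t`, the commutator projects onto `N_τ`: for
`σ = P_s` and `τ = P_t`, the vector `v^{adj}_τ` is a multiple of `∑ a, A_{P_a, ⁅P_a, τ⁆}`, and the
prescribed value of `Θ` at `A_{σ,σ·τ}` is a multiple of `∑ a, χ(a, s) A_{P_a, ⁅P_a, τ⁆}`.

*Existence.* The linear map `A ⊗ B ↦ P_a A P_a B` sends `A_{σ,σ·τ}` to a multiple of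
`χ(a, s) (1 - χ(a, t)) τ`, so it recovers `τ` and the sign `χ(a, s)`, although `A_{σ,σ·τ}` does not
determine `σ`. Applying `M ↦ A_{P_a, ⁅P_a, M⁆}` and summing over `a` gives `Θ`.

*Orthogonality.* The Paulis are an orthonormal basis, so `∑ a, tr(P_a A) P_a = A`. Together with the
invariance of the trace form this gives `⟨∑ b, A_{P_b, ⁅P_b, ν⁆}, A_{C,D}⟩ = 2 tr(⁅C, D⁆ ν)`. As
`⁅P_a, ⁅P_a, τ⁆⁆` is a multiple of `(1 - χ(a, t)) τ`, pairing `v^{adj}_ν` with the value of `Θ` leaves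
the factor `∑ a, χ(a, s) (1 - χ(a, t))`, which is zero by orthogonality of characters because `s` is
neither `0` nor `t`.
-/

section PiKronecker

variable {ι R : Type*} [Fintype ι]

/-- The Kronecker product of a finite family of matrices, with rows and columns indexed by
functions on the index type. It presents `PauliOp` as a product over the qubits. -/
def piKronecker [CommMonoid R] {m n : ι → Type*} (f : ∀ i, Matrix (m i) (n i) R) :
    Matrix (∀ i, m i) (∀ i, n i) R :=
  Matrix.of fun x y => ∏ i, f i (x i) (y i)

lemma piKronecker_mul [DecidableEq ι] [CommSemiring R] {l m n : ι → Type*} [∀ i, Fintype (m i)]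
    (f : ∀ i, Matrix (l i) (m i) R) (g : ∀ i, Matrix (m i) (n i) R) :
    piKronecker f * piKronecker g = piKronecker fun i => f i * g i := by
  ext x y
  simp only [piKronecker, Matrix.mul_apply, Matrix.of_apply, Fintype.prod_sum,
    Finset.prod_mul_distrib]

lemma piKronecker_one [CommMonoidWithZero R] {n : ι → Type*} [∀ i, DecidableEq (n i)]
    [DecidableEq (∀ i, n i)] :
    piKronecker (fun i => (1 : Matrix (n i) (n i) R)) = 1 := by
  ext x y
  simp [piKronecker, Matrix.one_apply, Finset.prod_ite_zero, funext_iff]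

lemma piKronecker_smul [CommMonoid R] {m n : ι → Type*} (c : ι → R)
    (f : ∀ i, Matrix (m i) (n i) R) :
    (piKronecker fun i => c i • f i) = (∏ i, c i) • piKronecker f := by
  ext x y
  simp [piKronecker, Finset.prod_mul_distrib]

lemma trace_piKronecker [DecidableEq ι] [CommSemiring R] {n : ι → Type*} [∀ i, Fintype (n i)]
    (f : ∀ i, Matrix (n i) (n i) R) : (piKronecker f).trace = ∏ i, (f i).trace := by
  simp only [piKronecker, Matrix.trace, Matrix.diag_apply, Matrix.of_apply, Fintype.prod_sum]

lemma conjTranspose_piKronecker [CommMonoid R] [StarMul R] {m n : ι → Type*}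
    (f : ∀ i, Matrix (m i) (n i) R) : (piKronecker f)ᴴ = piKronecker fun i => (f i)ᴴ := by
  ext x y
  simp [piKronecker, star_prod]

end PiKronecker

section TraceForm

variable {n R : Type*} [Fintype n]

lemma trace_lie_mul [CommRing R] (A B C : Matrix n n R) :
    (⁅A, B⁆ * C).trace = (A * ⁅B, C⁆).trace := by
  simp only [Ring.lie_def, Matrix.sub_mul, Matrix.mul_sub, Matrix.trace_sub, Matrix.mul_assoc,
    Matrix.trace_mul_comm B]

lemma trace_conjTranspose_lie_mul [CommRing R] [StarRing R] {A N : Matrix n n R}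
    (hA : A.IsHermitian) (hN : N.IsHermitian) (B : Matrix n n R) :
    (⁅A, N⁆ᴴ * B).trace = (A * ⁅B, N⁆).trace := by
  simp only [Ring.lie_def, Matrix.conjTranspose_sub, Matrix.conjTranspose_mul, hA.eq, hN.eq,
    Matrix.sub_mul, Matrix.mul_sub, Matrix.trace_sub, Matrix.mul_assoc, Matrix.trace_mul_comm N]

lemma sum_trace_mul_smul_of_orthonormal {ι K : Type*} [Fintype ι] [DecidableEq ι] [Field K]
    {e : ι → Matrix n n K} (he : ∀ i j, (e i * e j).trace = if i = j then 1 else 0)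
    (hcard : Fintype.card ι = Fintype.card n * Fintype.card n) (A : Matrix n n K) :
    ∑ i, (e i * A).trace • e i = A := by
  have trace_combination (c : ι → K) (j : ι) : (e j * ∑ i, c i • e i).trace = c j := by
    simp [Matrix.mul_sum, Matrix.trace_sum, he]
  have injective : Function.Injective (Fintype.linearCombination K e) := fun c d hcd => by
    ext j
    simp only [Fintype.linearCombination_apply] at hcd
    rw [← trace_combination c j, hcd, trace_combination]
  have surjective : Function.Surjective (Fintype.linearCombination K e) :=
    (LinearMap.injective_iff_surjective_of_finrank_eq_finrank
      (by simp [Module.finrank_matrix, hcard])).mp injective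
  obtain ⟨c, rfl⟩ := surjective A
  simp only [Fintype.linearCombination_apply, trace_combination]

end TraceForm

lemma finsum_mem_eq_sum_indicator {ι α M : Type*} [Fintype ι] [AddCommMonoid M] {e : ι → α}
    (he : Function.Injective e) {S : Set α} (hS : S ⊆ Set.range e) (g : α → M) :
    ∑ᶠ x ∈ S, g x = ∑ i, S.indicator g (e i) := by
  rw [← Set.image_preimage_eq_of_subset hS, finsum_mem_image he.injOn, finsum_mem_def,
    finsum_eq_sum_of_fintype, Set.image_preimage_eq_of_subset hS]
  rfl

section SingleQubit

/-- The sign with which the single-qubit Paulis with labels `k` and `l` commute. -/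
def commSign₁ (k l : Fin 4) : ℂ := if k = 0 ∨ l = 0 ∨ k = l then 1 else -1

lemma pauli1_mul_self (k : Fin 4) : pauli1 k * pauli1 k = 1 := by
  fin_cases k <;> ext i j <;> fin_cases i <;> fin_cases j <;>
    simp [pauli1, Matrix.mul_apply, Fin.sum_univ_two]

lemma pauli1_mul_comm (k l : Fin 4) :
    pauli1 k * pauli1 l = commSign₁ k l • (pauli1 l * pauli1 k) := by
  fin_cases k <;> fin_cases l <;> ext i j <;> fin_cases i <;> fin_cases j <;>
    simp [pauli1, commSign₁, Matrix.mul_apply, Fin.sum_univ_two]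

lemma trace_pauli1_mul (k l : Fin 4) :
    (pauli1 k * pauli1 l).trace = if k = l then 2 else 0 := by
  fin_cases k <;> fin_cases l <;>
    simp [pauli1, Matrix.trace, Fin.sum_univ_two] <;> norm_num

lemma pauli1_isHermitian (k : Fin 4) : (pauli1 k).IsHermitian := by
  fin_cases k <;> ext i j <;> fin_cases i <;> fin_cases j <;> simp [pauli1]

lemma commSign₁_mul_self (k l : Fin 4) : commSign₁ k l * commSign₁ k l = 1 := by
  unfold commSign₁
  split_ifs <;> norm_num

lemma commSign₁_symm (k l : Fin 4) : commSign₁ k l = commSign₁ l k := by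
  simp only [commSign₁, eq_comm (a := k) (b := l), or_left_comm (a := k = 0)]

lemma sum_commSign₁_mul_commSign₁ {k l : Fin 4} (h : k ≠ l) :
    ∑ j, commSign₁ j k * commSign₁ j l = 0 := by
  fin_cases k <;> fin_cases l <;> simp [commSign₁, Fin.sum_univ_four] at h ⊢

end SingleQubit

section CommSign

variable {q : ℕ}

/-- The sign `χ(a, b)` with which the Paulis with labels `a` and `b` commute. -/
def commSign (a b : Fin q → Fin 4) : ℂ := ∏ i, commSign₁ (a i) (b i)

lemma commSign_zero_right (a : Fin q → Fin 4) : commSign a 0 = 1 := by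
  simp [commSign, commSign₁]

lemma commSign_zero_left (a : Fin q → Fin 4) : commSign 0 a = 1 := by
  simp [commSign, commSign₁]

lemma commSign_symm (a b : Fin q → Fin 4) : commSign a b = commSign b a := by
  simp only [commSign, commSign₁_symm (a _)]

lemma commSign_mul_self (a b : Fin q → Fin 4) : commSign a b * commSign a b = 1 := by
  simp only [commSign, ← Finset.prod_mul_distrib, commSign₁_mul_self, Finset.prod_const_one]

lemma commSign_eq_one_or_neg_one (a b : Fin q → Fin 4) : commSign a b = 1 ∨ commSign a b = -1 :=
  mul_self_eq_one_iff.mp (commSign_mul_self a b)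

lemma sum_commSign_mul_commSign {b c : Fin q → Fin 4} (h : b ≠ c) :
    ∑ a, commSign a b * commSign a c = 0 := by
  obtain ⟨i, hi⟩ := Function.ne_iff.mp h
  simp only [commSign, ← Finset.prod_mul_distrib]
  rw [← Fintype.prod_sum fun i k => commSign₁ k (b i) * commSign₁ k (c i)]
  exact Finset.prod_eq_zero (Finset.mem_univ i) (sum_commSign₁_mul_commSign₁ hi)

lemma sum_commSign_mul_one_sub_commSign {s t : Fin q → Fin 4} (hs0 : s ≠ 0) (hst : s ≠ t) :
    ∑ a, commSign a s * (1 - commSign a t) = 0 := by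
  have sum_commSign : ∑ a, commSign a s = 0 := by
    simpa only [commSign_zero_right, mul_one] using sum_commSign_mul_commSign hs0
  simp only [mul_sub, mul_one, Finset.sum_sub_distrib, sum_commSign, sum_commSign_mul_commSign hst,
    sub_zero]

end CommSign

section NormPauli

variable {q : ℕ}

lemma sqrtd_mul_self : sqrtd q * sqrtd q = 2 ^ q := by
  rw [sqrtd, ← Complex.ofReal_mul, Real.mul_self_sqrt (by positivity)]
  simp

/-- The normalized Pauli operator `P_a` with label `a`; these exhaust `sigmaHat q`. -/
def normPauli (a : Fin q → Fin 4) : Mat q := (sqrtd q)⁻¹ • PauliOp a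

lemma PauliOp_eq_piKronecker (a : Fin q → Fin 4) :
    PauliOp a = piKronecker fun i => pauli1 (a i) := rfl

lemma normPauli_zero : normPauli 0 = sigma0 q := by
  rw [normPauli, sigma0, PauliOp_eq_piKronecker, ← piKronecker_one]
  rfl

lemma normPauli_isHermitian (a : Fin q → Fin 4) : (normPauli a).IsHermitian := by
  simp only [Matrix.IsHermitian, normPauli, PauliOp_eq_piKronecker, Matrix.conjTranspose_smul,
    conjTranspose_piKronecker, (pauli1_isHermitian _).eq]
  simp [sqrtd]

lemma normPauli_mul (a b : Fin q → Fin 4) :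
    normPauli a * normPauli b =
      ((2 : ℂ) ^ q)⁻¹ • piKronecker fun i => pauli1 (a i) * pauli1 (b i) := by
  simp only [normPauli, PauliOp_eq_piKronecker, smul_mul_smul_comm, piKronecker_mul, ← mul_inv,
    sqrtd_mul_self]

lemma normPauli_mul_self (a : Fin q → Fin 4) :
    normPauli a * normPauli a = ((2 : ℂ) ^ q)⁻¹ • 1 := by
  simp only [normPauli_mul, pauli1_mul_self, piKronecker_one]

lemma normPauli_mul_comm (a b : Fin q → Fin 4) :
    normPauli a * normPauli b = commSign a b • (normPauli b * normPauli a) := by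
  simp only [normPauli_mul, pauli1_mul_comm (a _), piKronecker_smul, commSign]
  rw [smul_comm]

lemma normPauli_conj (a b : Fin q → Fin 4) :
    normPauli a * normPauli b * normPauli a =
      (commSign a b * ((2 : ℂ) ^ q)⁻¹) • normPauli b := by
  rw [normPauli_mul_comm, smul_mul_assoc, mul_assoc, normPauli_mul_self, mul_smul_comm, mul_one,
    smul_smul]

lemma trace_normPauli_mul (a b : Fin q → Fin 4) :
    (normPauli a * normPauli b).trace = if a = b then 1 else 0 := by
  simp only [normPauli_mul, Matrix.trace_smul, trace_piKronecker, trace_pauli1_mul,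
    Finset.prod_ite_zero, Finset.mem_univ, forall_const, ← funext_iff (f := a)]
  split_ifs <;> simp

lemma normPauli_injective : Function.Injective (normPauli (q := q)) := by
  intro a b hab
  have := trace_normPauli_mul a b
  by_contra hne
  rw [← hab, trace_normPauli_mul] at this
  simp [hne] at this

lemma sum_trace_normPauli_mul_smul (A : Mat q) :
    ∑ a, (normPauli a * A).trace • normPauli a = A :=
  sum_trace_mul_smul_of_orthonormal trace_normPauli_mul (by simp [← mul_pow]) A

lemma isUnit_normPauli (a : Fin q → Fin 4) : IsUnit (normPauli a) :=
  .of_mul_eq_one ((2 : ℂ) ^ q • normPauli a) (by simp [normPauli_mul_self])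

lemma normPauli_mul_ne_zero (a b : Fin q → Fin 4) : normPauli a * normPauli b ≠ 0 :=
  ((isUnit_normPauli a).mul (isUnit_normPauli b)).ne_zero

lemma normPauli_commute_iff {a b : Fin q → Fin 4} :
    normPauli a * normPauli b = normPauli b * normPauli a ↔ commSign a b = 1 := by
  rw [normPauli_mul_comm]
  nth_rw 2 [← one_smul ℂ (normPauli b * normPauli a)]
  exact (smul_left_injective ℂ (normPauli_mul_ne_zero b a)).eq_iff

lemma normPauli_anticommute_iff {a b : Fin q → Fin 4} :
    normPauli a * normPauli b + normPauli b * normPauli a = 0 ↔ commSign a b = -1 := by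
  rw [normPauli_mul_comm]
  nth_rw 2 [← one_smul ℂ (normPauli b * normPauli a)]
  rw [← add_smul, smul_eq_zero_iff_left (normPauli_mul_ne_zero b a),
    add_eq_zero_iff_eq_neg]

lemma normPauli_lie (a b : Fin q → Fin 4) :
    ⁅normPauli a, normPauli b⁆ = (1 - commSign a b) • (normPauli a * normPauli b) := by
  rw [Ring.lie_def, normPauli_mul_comm b a, commSign_symm, sub_smul, one_smul]

lemma one_sub_commSign_smul_normPauli_lie (a t : Fin q → Fin 4) :
    (1 - commSign a t) • ⁅normPauli a, normPauli t⁆ = (2 : ℂ) • ⁅normPauli a, normPauli t⁆ := by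
  rw [normPauli_lie, smul_smul, smul_smul]
  congr 1
  linear_combination commSign_mul_self a t

lemma normPauli_lie_lie (a b : Fin q → Fin 4) :
    ⁅normPauli a, ⁅normPauli a, normPauli b⁆⁆ =
      (2 * ((2 : ℂ) ^ q)⁻¹ * (1 - commSign a b)) • normPauli b := by
  simp only [Ring.lie_def, mul_sub, sub_mul]
  rw [← mul_assoc, ← mul_assoc (normPauli a) (normPauli b), normPauli_conj, normPauli_mul_self,
    mul_assoc (normPauli b), normPauli_mul_self, smul_mul_assoc, one_mul, mul_smul_comm, mul_one]
  module

end NormPauli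

section PauliSets

variable {q : ℕ}

lemma sigmaSet_eq_image : sigmaSet q = normPauli '' {0}ᶜ := by
  have sigmaHat_eq_range : sigmaHat q = Set.range normPauli :=
    Set.ext fun _ => exists_congr fun _ => eq_comm
  rw [Set.image_compl_eq_range_sdiff_image normPauli_injective, Set.image_singleton, normPauli_zero,
    ← sigmaHat_eq_range, sigmaSet]

lemma normPauli_mem_sigmaSet {a : Fin q → Fin 4} : normPauli a ∈ sigmaSet q ↔ a ≠ 0 := by
  rw [sigmaSet_eq_image, normPauli_injective.mem_set_image, Set.mem_compl_singleton_iff]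

lemma NSet_subset_range (τ : Mat q) : NSet τ ⊆ Set.range normPauli := fun _ hσ =>
  Set.image_subset_range _ _ (sigmaSet_eq_image ▸ hσ.1)

lemma normPauli_mem_NSet {a b : Fin q → Fin 4} :
    normPauli a ∈ NSet (normPauli b) ↔ commSign a b = -1 := by
  simp only [NSet, Set.mem_ofPred_eq, normPauli_anticommute_iff, normPauli_mem_sigmaSet,
    and_iff_right_iff_imp]
  rintro h rfl
  norm_num [commSign_zero_left] at h

lemma normPauli_mem_CSet {a b : Fin q → Fin 4} :
    normPauli a ∈ CSet (normPauli b) ↔ a ≠ 0 ∧ a ≠ b ∧ commSign a b = 1 := by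
  simp only [CSet, Set.mem_ofPred_eq, normPauli_commute_iff, normPauli_mem_sigmaSet,
    normPauli_injective.ne_iff]

lemma exists_normPauli_of_mem_CSet {σ τ : Mat q} (hτ : τ ∈ sigmaSet q) (hσ : σ ∈ CSet τ) :
    ∃ s t : Fin q → Fin 4,
      s ≠ 0 ∧ s ≠ t ∧ commSign s t = 1 ∧ normPauli s = σ ∧ normPauli t = τ := by
  obtain ⟨t, -, rfl⟩ := sigmaSet_eq_image ▸ hτ
  obtain ⟨s, -, rfl⟩ := sigmaSet_eq_image ▸ hσ.1
  obtain ⟨hs0, hne, hst⟩ := normPauli_mem_CSet.mp hσ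
  exact ⟨s, t, hs0, hne, hst, rfl, rfl⟩

variable {V : Type*} [AddCommGroup V] [Module ℂ V]

lemma finsum_mem_NSet (t : Fin q → Fin 4) (g : Mat q → V) :
    ∑ᶠ σ ∈ NSet (normPauli t), g σ = ∑ a, ((1 - commSign a t) / 2) • g (normPauli a) := by
  rw [finsum_mem_eq_sum_indicator normPauli_injective (NSet_subset_range _)]
  refine Finset.sum_congr rfl fun a _ => ?_
  rcases commSign_eq_one_or_neg_one a t with h | h <;>
    norm_num [Set.indicator_apply, normPauli_mem_NSet, h]

lemma finsum_mem_NSet_inter_CSet_sub_finsum_mem_NSet_inter_NSet {s t : Fin q → Fin 4}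
    (hst : commSign s t = 1) (g : Mat q → V) :
    ∑ᶠ σ ∈ NSet (normPauli t) ∩ CSet (normPauli s), g σ -
        ∑ᶠ σ ∈ NSet (normPauli t) ∩ NSet (normPauli s), g σ =
      ∑ a, (commSign a s * ((1 - commSign a t) / 2)) • g (normPauli a) := by
  have inter_subset_range (S : Set (Mat q)) :
      NSet (normPauli t) ∩ S ⊆ Set.range normPauli :=
    Set.inter_subset_left.trans (NSet_subset_range _)
  rw [finsum_mem_eq_sum_indicator normPauli_injective (inter_subset_range _),
    finsum_mem_eq_sum_indicator normPauli_injective (inter_subset_range _),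
    ← Finset.sum_sub_distrib]
  refine Finset.sum_congr rfl fun a _ => ?_
  classical
  simp only [Set.indicator_apply, Set.mem_inter_iff, normPauli_mem_NSet, normPauli_mem_CSet]
  rcases commSign_eq_one_or_neg_one a t with hat | hat
  · norm_num [hat]
  have a_ne_zero : a ≠ 0 := by
    rintro rfl
    norm_num [commSign_zero_left] at hat
  have a_ne_s : a ≠ s := by
    rintro rfl
    norm_num [hst] at hat
  rcases commSign_eq_one_or_neg_one a s with has | has <;>
    norm_num [hat, has, a_ne_zero, a_ne_s]

end PauliSets

section AVec

variable {q : ℕ}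

/-- The linear map `B ↦ A_{A,B}`. -/
def AVecRight (A : Mat q) : Mat q →ₗ[ℂ] BMat q :=
  (Real.sqrt 2 : ℂ)⁻¹ • (kroneckerBilinear (R := ℂ) A - (kroneckerBilinear (R := ℂ)).flip A)

lemma AVecRight_apply (A B : Mat q) : AVecRight A B = AVec A B := rfl

lemma AVec_smul_right (c : ℂ) (A B : Mat q) : AVec A (c • B) = c • AVec A B :=
  map_smul (AVecRight A) c B

lemma smul_AVec_normPauli_nprod (a t : Fin q → Fin 4) :
    ((1 - commSign a t) / 2) • AVec (normPauli a) (Complex.I • nprod (normPauli a) (normPauli t)) =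
      (Complex.I * sqrtd q / 2) • AVec (normPauli a) ⁅normPauli a, normPauli t⁆ := by
  simp only [nprod, normPauli_lie, AVec_smul_right, smul_smul]
  congr 1
  ring

/-- The vector `∑ a, χ(a, s) A_{P_a, ⁅P_a, τ⁆}`. For `s = 0` it is proportional to `v^{adj}_τ`, and
for `s` the label of some `σ ∈ C_τ` it is proportional to the value of `Θ` at `A_{σ,σ·τ}`. -/
def signedLieSum (s : Fin q → Fin 4) (τ : Mat q) : BMat q :=
  ∑ a, commSign a s • AVec (normPauli a) ⁅normPauli a, τ⁆

lemma vadjA_normPauli (n : Fin q → Fin 4) :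
    vadjA (normPauli n) =
      ((Real.sqrt (2 * ((NSet (normPauli n)).ncard : ℝ)) : ℂ)⁻¹ * (Complex.I * sqrtd q / 2)) •
        signedLieSum 0 (normPauli n) := by
  simp only [vadjA, finsum_mem_NSet, smul_AVec_normPauli_nprod, ← Finset.smul_sum, smul_smul,
    signedLieSum, commSign_zero_right, one_smul]

lemma finsum_AVec_eq_signedLieSum {s t : Fin q → Fin 4} (hst : commSign s t = 1) :
    ∑ᶠ σ ∈ NSet (normPauli t) ∩ CSet (normPauli s), AVec σ (Complex.I • nprod σ (normPauli t)) -
        ∑ᶠ σ ∈ NSet (normPauli t) ∩ NSet (normPauli s),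
          AVec σ (Complex.I • nprod σ (normPauli t)) =
      (Complex.I * sqrtd q / 2) • signedLieSum s (normPauli t) := by
  simp only [finsum_mem_NSet_inter_CSet_sub_finsum_mem_NSet_inter_NSet hst
      fun σ => AVec σ (Complex.I • nprod σ (normPauli t)),
    mul_smul, smul_AVec_normPauli_nprod, signedLieSum, Finset.smul_sum]
  exact Finset.sum_congr rfl fun _ _ => smul_comm _ _ _

end AVec

section Theta

variable {q : ℕ}

attribute [local instance] LieRing.ofAssociativeRing

/-- The linear extension of `A ⊗ B ↦ P A P B`. -/
def conjMul {n R : Type*} [Fintype n] [DecidableEq n] [CommRing R] (P : Matrix n n R) :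
    Matrix (n × n) (n × n) R →ₗ[R] Matrix n n R :=
  LinearMap.mul' R (Matrix n n R) ∘ₗ (LinearMap.mulLeftRight R (P, P)).rTensor (Matrix n n R) ∘ₗ
    (kroneckerLinearEquiv n n n n R).symm.toLinearMap

lemma conjMul_kronecker {n R : Type*} [Fintype n] [DecidableEq n] [CommRing R]
    (P A B : Matrix n n R) : conjMul P (A ⊗ₖ B) = P * A * P * B := by
  simp [conjMul]

/-- An explicit extension of `Θ` to all of `M_d ⊗ M_d`: it sends `A ⊗ B` to a multiple of
`∑ a, A_{P_a, ⁅P_a, P_a A P_a B⁆}`. -/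
def thetaMap (q : ℕ) : BMat q →ₗ[ℂ] BMat q :=
  (Complex.I * Real.sqrt 2 * (2 ^ q) ^ 2 / 4) •
    ∑ a, AVecRight (normPauli a) ∘ₗ LieAlgebra.ad ℂ (Mat q) (normPauli a) ∘ₗ conjMul (normPauli a)

lemma conjMul_AVec_normPauli (a : Fin q → Fin 4) {s t : Fin q → Fin 4}
    (hst : commSign s t = 1) :
    conjMul (normPauli a) (AVec (normPauli s) (nprod (normPauli s) (normPauli t))) =
      ((Real.sqrt 2 : ℂ)⁻¹ * sqrtd q * (((2 : ℂ) ^ q)⁻¹) ^ 2 *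
        (commSign a s * (1 - commSign a t))) • normPauli t := by
  have conjMul_tensor : normPauli a * normPauli s * normPauli a * (normPauli s * normPauli t) =
      (commSign a s * (((2 : ℂ) ^ q)⁻¹) ^ 2) • normPauli t := by
    rw [normPauli_conj, smul_mul_assoc, ← mul_assoc, normPauli_mul_self, smul_mul_assoc, one_mul,
      smul_smul, sq, mul_assoc]
  have conjMul_tensor_swap : normPauli a * (normPauli s * normPauli t) * normPauli a * normPauli s =
      (commSign a s * commSign a t * (((2 : ℂ) ^ q)⁻¹) ^ 2) • normPauli t := by
    have conj_mul : normPauli a * (normPauli s * normPauli t) * normPauli a =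
        (commSign a s * commSign a t * ((2 : ℂ) ^ q)⁻¹) • (normPauli s * normPauli t) := by
      rw [← mul_assoc (normPauli a), normPauli_mul_comm a s, smul_mul_assoc, smul_mul_assoc,
        mul_assoc (normPauli s), mul_assoc (normPauli s), normPauli_conj, mul_smul_comm, smul_smul,
        ← mul_assoc]
    rw [conj_mul, smul_mul_assoc, normPauli_conj, hst, smul_smul, one_mul, sq, ← mul_assoc]
  simp only [AVec, nprod, Matrix.kronecker_smul, Matrix.smul_kronecker, ← smul_sub, map_smul,
    map_sub, conjMul_kronecker, conjMul_tensor, conjMul_tensor_swap]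
  module

lemma thetaMap_AVec_normPauli {s t : Fin q → Fin 4} (hst : commSign s t = 1) :
    thetaMap q (AVec (normPauli s) (nprod (normPauli s) (normPauli t))) =
      (Complex.I * sqrtd q / 2) • signedLieSum s (normPauli t) := by
  simp only [thetaMap, signedLieSum, LinearMap.smul_apply, LinearMap.sum_apply,
    LinearMap.comp_apply, AVecRight_apply, LieAlgebra.ad_apply, conjMul_AVec_normPauli _ hst,
    Finset.smul_sum]
  refine Finset.sum_congr rfl fun a _ => ?_
  rw [← mul_assoc, mul_smul, lie_smul, lie_smul, one_sub_commSign_smul_normPauli_lie]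
  simp only [AVec_smul_right, smul_smul]
  congr 1
  have : (Real.sqrt 2 : ℂ) ≠ 0 := by simp
  field_simp
  ring

lemma thetaProp_thetaMap : ThetaProp q (thetaMap q) := by
  intro τ hτ σ hσ
  obtain ⟨s, t, -, -, hst, rfl, rfl⟩ := exists_normPauli_of_mem_CSet hτ hσ
  rw [thetaMap_AVec_normPauli hst, finsum_AVec_eq_signedLieSum hst]

end Theta

section HilbertSchmidt

variable {q : ℕ}

attribute [local instance] LieRing.ofAssociativeRing

/-- The linear functional `⟨X, ·⟩`. -/
def hsRight (X : BMat q) : BMat q →ₗ[ℂ] ℂ :=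
  Matrix.traceLinearMap (Idx q × Idx q) ℂ ℂ ∘ₗ LinearMap.mulLeft ℂ Xᴴ

lemma hsRight_apply (X Y : BMat q) : hsRight X Y = hs X Y := rfl

lemma hs_smul_left (c : ℂ) (X Y : BMat q) : hs (c • X) Y = star c * hs X Y := by
  simp [hs]

lemma hs_sum_left {ι : Type*} (s : Finset ι) (f : ι → BMat q) (Y : BMat q) :
    hs (∑ i ∈ s, f i) Y = ∑ i ∈ s, hs (f i) Y := by
  simp [hs, Matrix.conjTranspose_sum, Finset.sum_mul, Matrix.trace_sum]

lemma hs_AVec_AVec (A B C D : Mat q) :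
    hs (AVec A B) (AVec C D) =
      (Aᴴ * C).trace * (Bᴴ * D).trace - (Aᴴ * D).trace * (Bᴴ * C).trace := by
  have sqrt_two_sq : (Real.sqrt 2 : ℂ)⁻¹ * (Real.sqrt 2 : ℂ)⁻¹ = 1 / 2 := by
    rw [← mul_inv, ← Complex.ofReal_mul, Real.mul_self_sqrt zero_le_two]
    norm_num
  simp only [hs, AVec, Matrix.conjTranspose_smul, Matrix.conjTranspose_sub,
    Matrix.conjTranspose_kronecker, smul_mul_smul_comm, Matrix.sub_mul, Matrix.mul_sub,
    ← Matrix.mul_kronecker_mul, Matrix.trace_smul, Matrix.trace_sub, Matrix.trace_kronecker,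
    star_inv₀, Complex.star_def, Complex.conj_ofReal, sqrt_two_sq, smul_eq_mul]
  ring

lemma sum_trace_normPauli_mul_mul_trace (A B : Mat q) :
    ∑ a, (normPauli a * A).trace * (normPauli a * B).trace = (A * B).trace := by
  conv_rhs => rw [← sum_trace_normPauli_mul_smul A]
  simp [Finset.sum_mul, Matrix.trace_sum]

lemma hs_signedLieSum_zero_AVec {ν : Mat q} (hν : ν.IsHermitian) (C D : Mat q) :
    hs (signedLieSum 0 ν) (AVec C D) = 2 * (⁅C, D⁆ * ν).trace := by
  simp only [signedLieSum, commSign_zero_right, one_smul, hs_sum_left, hs_AVec_AVec,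
    (normPauli_isHermitian _).eq, trace_conjTranspose_lie_mul (normPauli_isHermitian _) hν,
    Finset.sum_sub_distrib, sum_trace_normPauli_mul_mul_trace]
  rw [← trace_lie_mul, ← trace_lie_mul, ← lie_skew D C, neg_mul, Matrix.trace_neg]
  ring

lemma hs_signedLieSum_zero_signedLieSum {ν : Mat q} (hν : ν.IsHermitian) {s t : Fin q → Fin 4}
    (hs0 : s ≠ 0) (hst : s ≠ t) :
    hs (signedLieSum 0 ν) (signedLieSum s (normPauli t)) = 0 := by
  have hs_term (a : Fin q → Fin 4) :
      hsRight (signedLieSum 0 ν)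
          (commSign a s • AVec (normPauli a) ⁅normPauli a, normPauli t⁆) =
        commSign a s * (1 - commSign a t) *
          (4 * ((2 : ℂ) ^ q)⁻¹ * (normPauli t * ν).trace) := by
    rw [map_smul, hsRight_apply, hs_signedLieSum_zero_AVec hν, normPauli_lie_lie, smul_mul_assoc,
      Matrix.trace_smul, smul_eq_mul, smul_eq_mul]
    ring
  rw [← hsRight_apply, signedLieSum.eq_def s, map_sum]
  simp only [hs_term]
  rw [← Finset.sum_mul, sum_commSign_mul_one_sub_commSign hs0 hst, zero_mul]

lemma hs_vadjA_apply_eq_zero {Θ : BMat q →ₗ[ℂ] BMat q} (hΘ : ThetaProp q Θ) {ν τ σ : Mat q}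
    (hν : ν ∈ sigmaSet q) (hτ : τ ∈ sigmaSet q) (hσ : σ ∈ CSet τ) :
    hs (vadjA ν) (Θ (AVec σ (nprod σ τ))) = 0 := by
  obtain ⟨n, -, rfl⟩ := sigmaSet_eq_image ▸ hν
  rw [hΘ τ hτ σ hσ]
  obtain ⟨s, t, hs0, hne, hst, rfl, rfl⟩ := exists_normPauli_of_mem_CSet hτ hσ
  rw [finsum_AVec_eq_signedLieSum hst, vadjA_normPauli, hs_smul_left, ← hsRight_apply, map_smul,
    hsRight_apply, hs_signedLieSum_zero_signedLieSum (normPauli_isHermitian n) hs0 hne,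
    smul_zero, mul_zero]

end HilbertSchmidt

/-- the map `Θ` on `V_[A]` is well defined (a linear map with the
defining property exists) and its image is orthogonal to `V_{adj}`. -/
theorem statement8 (q : ℕ) (hq : 2 ≤ q) :
    (∃ Θ : BMat q →ₗ[ℂ] BMat q, ThetaProp q Θ) ∧
    ∀ Θ : BMat q →ₗ[ℂ] BMat q, ThetaProp q Θ →
      ∀ ν ∈ sigmaSet q, ∀ x ∈ VAcom' q, hs (vadjA ν) (Θ x) = 0 := by
  refine ⟨⟨thetaMap q, thetaProp_thetaMap⟩, fun Θ hΘ ν hν x hx => ?_⟩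
  suffices VAcom' q ≤ LinearMap.ker (hsRight (vadjA ν) ∘ₗ Θ) from this hx
  refine Submodule.span_le.mpr ?_
  rintro _ ⟨τ, hτ, σ, hσ, rfl⟩
  exact hs_vadjA_apply_eq_zero hΘ hν hτ hσ

end CliffordPaper
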